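/- Let d ≥ 1, let k > 0, and let μ, ν be Borel probability measures on ℝ^d with finite first moments. Then the infimum over all convex k-Lipschitz functions f : ℝ^d → ℝ of (∫ f dν − ∫ f dμ) equals the infimum over all Borel probability measures ρ on ℝ^d with support contained in the closed ball of radius k centered at the origin of (C(ν,ρ) − C(μ,ρ)). -/

import Mathlib

open MeasureTheory Metric RealInnerProductSpace

noncomputable section

/-- The set of couplings of two measures on `ℝ^d`. -/
def Couplings {d : ℕ} (α β : Measure (EuclideanSpace ℝ (Fin d))) :
    Set (Measure (EuclideanSpace ℝ (Fin d) × EuclideanSpace ℝ (Fin d))) :=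
  {π | π.map Prod.fst = α ∧ π.map Prod.snd = β}

/-- `C(α,β) = sup_{π ∈ Π(α,β)} ∫ ⟨x,y⟩ dπ`. -/
def OTcost {d : ℕ} (α β : Measure (EuclideanSpace ℝ (Fin d))) : ℝ :=
  sSup {r : ℝ | ∃ π ∈ Couplings α β, r = ∫ p, ⟪p.1, p.2⟫ ∂π}

/-!
A convex `k`-Lipschitz `f` has a measurable selection `T` of its `ε`-subdifferential, with values in
the ball of radius `k`. Transporting `μ` by `T` to `ρ = T_* μ` is optimal up to `ε`, with potentials
`f` and its conjugate, and the same potentials bound `C(ν, ρ)` from above, so that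
`C(ν, ρ) - C(μ, ρ) ≤ ∫ f dν - ∫ f dμ + ε`.

Conversely, let `f ⊕ g` be nearly optimal potentials for `C(ν, ρ)`. Since `ρ` lives on the ball of
radius `k`, replacing `f` by the conjugate of `g` on the ball makes it convex and `k`-Lipschitz
without increasing `∫ f dν`, and weak duality for `C(μ, ρ)` gives the reverse inequality.

The existence of such potentials is Kantorovich duality with one compact factor: the dual value is
sublinear in the reward, a linear functional below it that is exact at `⟪x, y⟫` exists by
Hahn–Banach, and the Riesz measure of this functional is a coupling.
-/

open Filter Set Topology TopologicalSpace
open scoped CompactlySupported NNReal Pointwise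

theorem csInf_eq_csInf_of_forall_exists_le_add {s t : Set ℝ} (hs : s.Nonempty) (hs' : BddBelow s)
    (hst : ∀ a ∈ s, ∀ ε > 0, ∃ b ∈ t, b ≤ a + ε) (hts : ∀ b ∈ t, ∀ ε > 0, ∃ a ∈ s, a ≤ b + ε) :
    sInf s = sInf t := by
  have h_lower : ∀ b ∈ t, sInf s ≤ b := fun b hb => le_of_forall_pos_le_add fun ε hε =>
    let ⟨_, ha, hab⟩ := hts b hb ε hε
    (csInf_le hs' ha).trans hab
  have ht : t.Nonempty :=
    let ⟨a, ha⟩ := hs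
    let ⟨b, hb, _⟩ := hst a ha 1 one_pos
    ⟨b, hb⟩
  refine le_antisymm (le_csInf ht h_lower) (le_csInf hs fun a ha => ?_)
  refine le_of_forall_pos_le_add fun ε hε => ?_
  obtain ⟨b, hb, hba⟩ := hst a ha ε hε
  exact (csInf_le ⟨_, h_lower⟩ hb).trans hba

theorem exists_linearMap_apply_eq_of_sublinear {V : Type*} [AddCommGroup V] [Module ℝ V]
    {N : V → ℝ} (N_smul : ∀ c : ℝ, 0 < c → ∀ x, N (c • x) = c * N x)
    (N_add : ∀ x y, N (x + y) ≤ N x + N y) (v : V) :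
    ∃ L : V →ₗ[ℝ] ℝ, L v = N v ∧ ∀ x, L x ≤ N x := by
  have N_zero : N 0 = 0 := by
    have := N_smul 2 two_pos 0
    rw [smul_zero] at this
    linarith
  have mul_le : ∀ t : ℝ, t * N v ≤ N (t • v) := by
    intro t
    rcases lt_trichotomy t 0 with ht | rfl | ht
    · have h_neg : N (t • v) = -t * N (-v) := by rw [← N_smul (-t) (neg_pos.2 ht), neg_smul_neg]
      have h_add : 0 ≤ N v + N (-v) := by simpa [N_zero] using N_add v (-v)
      nlinarith
    · simp [N_zero]
    · exact (N_smul t ht v).ge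
  have h_ker : ∀ t : ℝ, t • v = 0 → RingHom.id ℝ t • N v = 0 := by
    intro t ht
    rcases smul_eq_zero.1 ht with rfl | rfl <;> simp [N_zero]
  obtain ⟨L, hLv, hLN⟩ := exists_extension_of_le_sublinear
    (LinearPMap.mkSpanSingleton' v (N v) h_ker) N N_smul N_add <| by
      rintro ⟨x, hx⟩
      obtain ⟨t, rfl⟩ := Submodule.mem_span_singleton.1 hx
      exact (LinearPMap.mkSpanSingleton'_apply v (N v) h_ker t hx).trans_le (mul_le t)
  exact ⟨L, (hLv ⟨v, Submodule.mem_span_singleton_self v⟩).trans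
    (LinearPMap.mkSpanSingleton'_apply_self v (N v) h_ker _), hLN⟩

theorem integral_comp_of_measurePreserving {Ω Ω' : Type*} [MeasurableSpace Ω] [MeasurableSpace Ω']
    {π : Measure Ω} {α : Measure Ω'} {T : Ω → Ω'} (hT : MeasurePreserving T π α) {f : Ω' → ℝ}
    (hf : AEStronglyMeasurable f α) : ∫ ω, f (T ω) ∂π = ∫ x, f x ∂α := by
  rw [← hT.map_eq] at hf ⊢
  exact (integral_map hT.aemeasurable hf).symm

theorem isFiniteMeasureOnCompacts_map_of_isProperMap {X Y : Type*} [TopologicalSpace X]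
    [TopologicalSpace Y] [T2Space Y] [MeasurableSpace X] [BorelSpace X] [MeasurableSpace Y]
    [BorelSpace Y] {π : Measure X} [IsFiniteMeasureOnCompacts π] {T : X → Y} (hT : IsProperMap T) :
    IsFiniteMeasureOnCompacts (π.map T) where
  lt_top_of_isCompact C hC := by
    rw [Measure.map_apply hT.continuous.measurable hC.measurableSet]
    exact (hT.isCompact_preimage hC).measure_lt_top

theorem exists_compactlySupported_integral_one_sub_mul_le {X : Type*} [TopologicalSpace X]
    [T2Space X] [NormalSpace X] [LocallyCompactSpace X] [MeasurableSpace X] [BorelSpace X]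
    {ν : Measure X} [ν.Regular] {w : X → ℝ} (hw : Integrable w ν) (hw₀ : 0 ≤ w)
    {ε : ℝ} (hε : 0 < ε) :
    ∃ χ : C_c(X, ℝ), (∀ x, χ x ∈ Icc 0 1) ∧
      Integrable (fun x => (1 - χ x) * w x) ν ∧ ∫ x, (1 - χ x) * w x ∂ν ≤ ε := by
  obtain ⟨u, hu_supp, hwu, -, hu⟩ := hw.exists_hasCompactSupport_integral_sub_le hε
  obtain ⟨χ, hχ_one, -, hχ_supp, hχ⟩ :=
    exists_continuous_one_zero_of_isCompact hu_supp isClosed_empty (disjoint_empty _)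
  have h_le : ∀ x, (1 - χ x) * w x ≤ ‖w x - u x‖ := by
    intro x
    by_cases hx : x ∈ tsupport u
    · simp [hχ_one hx]
    · rw [image_eq_zero_of_notMem_tsupport hx, sub_zero]
      exact (mul_le_of_le_one_left (hw₀ x) (by linarith [(hχ x).1])).trans (Real.le_norm_self _)
  have h_int : Integrable (fun x => (1 - χ x) * w x) ν := by
    refine (hw.sub hu).norm.mono' (by fun_prop) (.of_forall fun x => ?_)
    rw [Real.norm_of_nonneg (mul_nonneg (by linarith [(hχ x).2]) (hw₀ x))]
    exact h_le x
  exact ⟨⟨χ, hχ_supp⟩, hχ, h_int, (integral_mono h_int (hw.sub hu).norm h_le).trans hwu⟩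

section WeakDuality

variable {X Y : Type*} [MeasurableSpace X] [MeasurableSpace Y] {α : Measure X} {β : Measure Y}
  {π : Measure (X × Y)}

theorem integral_le_integral_add_integral_of_marginals (hfst : MeasurePreserving Prod.fst π α)
    (hsnd : MeasurePreserving Prod.snd π β) {c : X × Y → ℝ} {f : X → ℝ} {g : Y → ℝ}
    (hc : Integrable c π) (hf : Integrable f α) (hg : Integrable g β)
    (hcfg : ∀ᵐ p ∂π, c p ≤ f p.1 + g p.2) :
    ∫ p, c p ∂π ≤ ∫ x, f x ∂α + ∫ y, g y ∂β := by
  have hf' : Integrable (fun p => f p.1) π := hfst.integrable_comp_of_integrable hf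
  have hg' : Integrable (fun p => g p.2) π := hsnd.integrable_comp_of_integrable hg
  rw [← integral_comp_of_measurePreserving hfst hf.1,
    ← integral_comp_of_measurePreserving hsnd hg.1, ← integral_add hf' hg']
  exact integral_mono_ae hc (hf'.add hg') hcfg

theorem integrable_of_abs_le_comp_fst (hfst : MeasurePreserving Prod.fst π α) {c : X × Y → ℝ}
    (hc : AEStronglyMeasurable c π) {w : X → ℝ} (hw : Integrable w α)
    (hcw : ∀ᵐ p ∂π, |c p| ≤ w p.1) : Integrable c π :=
  (hfst.integrable_comp_of_integrable hw).mono' hc hcw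

theorem abs_integral_le_of_abs_le_comp_fst (hfst : MeasurePreserving Prod.fst π α) {c : X × Y → ℝ}
    {w : X → ℝ} (hw : Integrable w α) (hcw : ∀ p, |c p| ≤ w p.1) :
    |∫ p, c p ∂π| ≤ ∫ x, w x ∂α := by
  rw [← integral_comp_of_measurePreserving hfst hw.1]
  exact norm_integral_le_of_norm_le (f := c) (g := fun p => w p.1)
    (hfst.integrable_comp_of_integrable hw) (.of_forall hcw)

end WeakDuality

section KantorovichDual

variable {X K : Type*} [MeasurableSpace X] [MeasurableSpace K]

/-- The values `∫ f dν + ∫ g dσ` of the admissible pairs `h ≤ f ⊕ g` in the Kantorovich dual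
problem with reward `h`. -/
def kantorovichDualValues (ν : Measure X) (σ : Measure K) (h : X × K → ℝ) : Set ℝ :=
  {r | ∃ (f : X → ℝ) (g : K → ℝ), Integrable f ν ∧ Integrable g σ ∧
    (∀ x y, h (x, y) ≤ f x + g y) ∧ ∫ x, f x ∂ν + ∫ y, g y ∂σ = r}

/-- The value of the Kantorovich dual problem with reward `h`. -/
def kantorovichDual (ν : Measure X) (σ : Measure K) (h : X × K → ℝ) : ℝ :=
  sInf (kantorovichDualValues ν σ h)

variable {ν : Measure X} {σ : Measure K}

theorem kantorovichDualValues_smul {t : ℝ} (ht : 0 < t) (h : X × K → ℝ) :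
    kantorovichDualValues ν σ (t • h) = t • kantorovichDualValues ν σ h := by
  have smul_subset : ∀ {t : ℝ}, 0 < t → ∀ h : X × K → ℝ,
      t • kantorovichDualValues ν σ h ⊆ kantorovichDualValues ν σ (t • h) := by
    rintro t ht h _ ⟨_, ⟨f, g, hf, hg, hfg, rfl⟩, rfl⟩
    refine ⟨t • f, t • g, hf.smul t, hg.smul t, fun x y => ?_, ?_⟩
    · simpa [mul_add] using mul_le_mul_of_nonneg_left (hfg x y) ht.le
    · simp [integral_const_mul, mul_add]
  refine (subset_smul_set_iff₀ ht.ne').2 ?_ |>.antisymm (smul_subset ht h)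
  simpa [smul_smul, ht.ne'] using smul_subset (inv_pos.2 ht) (t • h)

theorem kantorovichDualValues_add_subset (h h' : X × K → ℝ) :
    kantorovichDualValues ν σ h + kantorovichDualValues ν σ h' ⊆
      kantorovichDualValues ν σ (h + h') := by
  rintro _ ⟨_, ⟨f, g, hf, hg, hfg, rfl⟩, _, ⟨f', g', hf', hg', hfg', rfl⟩, rfl⟩
  refine ⟨f + f', g + g', hf.add hf', hg.add hg', fun x y => ?_, ?_⟩
  · exact (add_le_add (hfg x y) (hfg' x y)).trans_eq (add_add_add_comm _ _ _ _)
  · simp only [Pi.add_apply, integral_add hf hf', integral_add hg hg']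
    exact add_add_add_comm _ _ _ _

end KantorovichDual

section FstDominated

variable {X K : Type*} [TopologicalSpace X] [TopologicalSpace K] [MeasurableSpace X]

/-- The continuous functions on `X × K` that are dominated by a `ν`-integrable function of the
first variable: the space of costs for which Kantorovich duality is proved when `K` is compact. -/
def fstDominated (ν : Measure X) (K : Type*) [TopologicalSpace K] :
    Submodule ℝ C(X × K, ℝ) where
  carrier := {h | ∃ w : X → ℝ, Integrable w ν ∧ ∀ p, |h p| ≤ w p.1}
  add_mem' := by
    rintro h h' ⟨w, hw, hhw⟩ ⟨w', hw', hhw'⟩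
    exact ⟨w + w', hw.add hw', fun p => (abs_add_le _ _).trans (add_le_add (hhw p) (hhw' p))⟩
  zero_mem' := ⟨0, integrable_zero _ _ _, by simp⟩
  smul_mem' := by
    rintro t h ⟨w, hw, hhw⟩
    refine ⟨fun x => |t| * w x, hw.const_mul _, fun p => ?_⟩
    rw [ContinuousMap.smul_apply, smul_eq_mul, abs_mul]
    exact mul_le_mul_of_nonneg_left (hhw p) (abs_nonneg t)

theorem mem_fstDominated_of_abs_le {ν : Measure X} [IsFiniteMeasure ν] {h : C(X × K, ℝ)} {C : ℝ}
    (hC : ∀ p, |h p| ≤ C) : h ∈ fstDominated ν K :=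
  ⟨fun _ => C, integrable_const C, hC⟩

variable [MeasurableSpace K] {ν : Measure X} {σ : Measure K}

theorem kantorovichDualValues_nonempty {h : C(X × K, ℝ)} (hh : h ∈ fstDominated ν K) :
    (kantorovichDualValues ν σ h).Nonempty := by
  obtain ⟨w, hw, hhw⟩ := hh
  refine ⟨_, w, 0, hw, integrable_zero _ _ _, fun x y => ?_, rfl⟩
  simpa using (le_abs_self _).trans (hhw (x, y))

variable [IsProbabilityMeasure ν] [IsProbabilityMeasure σ] [OpensMeasurableSpace (X × K)]

theorem kantorovichDualValues_bddBelow {h : C(X × K, ℝ)} (hh : h ∈ fstDominated ν K) :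
    BddBelow (kantorovichDualValues ν σ h) := by
  obtain ⟨w, hw, hhw⟩ := hh
  refine ⟨∫ p, h p ∂ν.prod σ, ?_⟩
  rintro _ ⟨f, g, hf, hg, hfg, rfl⟩
  exact integral_le_integral_add_integral_of_marginals measurePreserving_fst measurePreserving_snd
    (integrable_of_abs_le_comp_fst measurePreserving_fst h.continuous.aestronglyMeasurable hw
      (.of_forall hhw)) hf hg (.of_forall fun p => hfg p.1 p.2)

theorem kantorovichDual_add_le (h h' : fstDominated ν K) :
    kantorovichDual ν σ (h + h' : fstDominated ν K).1 ≤
      kantorovichDual ν σ h.1 + kantorovichDual ν σ h'.1 := by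
  have hne := kantorovichDualValues_nonempty (σ := σ) h.2
  have hne' := kantorovichDualValues_nonempty (σ := σ) h'.2
  rw [kantorovichDual, kantorovichDual, kantorovichDual,
    ← csInf_add hne (kantorovichDualValues_bddBelow h.2) hne' (kantorovichDualValues_bddBelow h'.2)]
  exact csInf_le_csInf (kantorovichDualValues_bddBelow (h + h').2) (hne.add hne')
    (kantorovichDualValues_add_subset _ _)

theorem exists_linearMap_apply_eq_kantorovichDual (c : fstDominated ν K) :
    ∃ L : fstDominated ν K →ₗ[ℝ] ℝ, L c = kantorovichDual ν σ c.1 ∧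
      ∀ h, L h ≤ kantorovichDual ν σ h.1 := by
  refine exists_linearMap_apply_eq_of_sublinear (N := fun h => kantorovichDual ν σ h.1)
    (fun t ht h => ?_) kantorovichDual_add_le c
  exact (congrArg sInf (kantorovichDualValues_smul ht _)).trans (Real.sInf_smul_of_nonneg ht.le _)

end FstDominated

section DominatedFunctional

variable {X K : Type*} [TopologicalSpace X] [TopologicalSpace K] [MeasurableSpace X]
  [MeasurableSpace K] [OpensMeasurableSpace (X × K)] {ν : Measure X} {σ : Measure K}
  [IsProbabilityMeasure ν] [IsProbabilityMeasure σ] {L : fstDominated ν K →ₗ[ℝ] ℝ}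

theorem apply_le_integral_add_integral (hL : ∀ h, L h ≤ kantorovichDual ν σ h.1)
    {h : fstDominated ν K} {f : X → ℝ} {g : K → ℝ} (hf : Integrable f ν) (hg : Integrable g σ)
    (hfg : ∀ x y, h.1 (x, y) ≤ f x + g y) : L h ≤ ∫ x, f x ∂ν + ∫ y, g y ∂σ :=
  (hL h).trans (csInf_le (kantorovichDualValues_bddBelow h.2) ⟨f, g, hf, hg, hfg, rfl⟩)

theorem apply_eq_integral_add_integral (hL : ∀ h, L h ≤ kantorovichDual ν σ h.1)
    {h : fstDominated ν K} {f : X → ℝ} {g : K → ℝ} (hf : Integrable f ν) (hg : Integrable g σ)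
    (hfg : ∀ x y, h.1 (x, y) = f x + g y) : L h = ∫ x, f x ∂ν + ∫ y, g y ∂σ := by
  have h_neg : L (-h) ≤ ∫ x, (-f) x ∂ν + ∫ y, (-g) y ∂σ :=
    apply_le_integral_add_integral hL hf.neg hg.neg fun x y => by simp [hfg, add_comm]
  simp only [map_neg, Pi.neg_apply, integral_neg] at h_neg
  linarith [apply_le_integral_add_integral hL hf hg fun x y => (hfg x y).le]

theorem abs_apply_le_integral (hL : ∀ h, L h ≤ kantorovichDual ν σ h.1) {h : fstDominated ν K}
    {w : X → ℝ} (hw : Integrable w ν) (hhw : ∀ p, |h.1 p| ≤ w p.1) : |L h| ≤ ∫ x, w x ∂ν := by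
  have apply_le : ∀ h' : fstDominated ν K, (∀ p, h'.1 p ≤ w p.1) → L h' ≤ ∫ x, w x ∂ν :=
    fun h' hh' => by
      simpa using apply_le_integral_add_integral hL (g := 0) hw (integrable_zero _ _ _)
        fun x y => by simpa using hh' (x, y)
  refine abs_le'.2 ⟨apply_le h fun p => (le_abs_self _).trans (hhw p), ?_⟩
  simpa using apply_le (-h) fun p => (neg_le_abs _).trans (hhw p)

theorem apply_nonneg (hL : ∀ h, L h ≤ kantorovichDual ν σ h.1) {h : fstDominated ν K}
    (hh : ∀ p, 0 ≤ h.1 p) : 0 ≤ L h := by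
  have h_neg : L (-h) ≤ ∫ x, (0 : X → ℝ) x ∂ν + ∫ y, (0 : K → ℝ) y ∂σ :=
    apply_le_integral_add_integral hL (integrable_zero _ _ _) (integrable_zero _ _ _)
      fun x y => by simpa using hh (x, y)
  simpa using h_neg

end DominatedFunctional

section Representation

variable {X K : Type*} [TopologicalSpace X] [TopologicalSpace K]

/-- The projection `X × K → X` as a cocompact map, for compact `K`: it pulls compactly supported
functions back to compactly supported functions. -/
def fstCocompactMap (X K : Type*) [TopologicalSpace X] [TopologicalSpace K] [CompactSpace K] :
    CocompactMap (X × K) X :=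
  ⟨⟨Prod.fst, continuous_fst⟩, hasBasis_cocompact.tendsto_right_iff.2 fun _ hC =>
    (isProperMap_fst_of_compactSpace.isCompact_preimage hC).compl_mem_cocompact⟩

variable [MeasurableSpace X]

/-- The inclusion of the compactly supported continuous functions into the space of continuous
functions dominated by an integrable function of the first variable. -/
def compactlySupportedToFstDominated (ν : Measure X) [IsFiniteMeasure ν] (K : Type*)
    [TopologicalSpace K] : C_c(X × K, ℝ) →ₗ[ℝ] fstDominated ν K where
  toFun φ := ⟨φ, let ⟨_, hC⟩ := φ.hasCompactSupport.exists_bound_of_continuous φ.continuous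
    mem_fstDominated_of_abs_le hC⟩
  map_add' _ _ := rfl
  map_smul' _ _ := rfl

variable [BorelSpace X] [CompactSpace K] [SecondCountableTopology K] [MeasurableSpace K]
  [BorelSpace K] {ν : Measure X} {σ : Measure K} [IsProbabilityMeasure ν] [IsProbabilityMeasure σ]
  {L : fstDominated ν K →ₗ[ℝ] ℝ}

theorem measurePreserving_snd_of_integral_eq_apply [T2Space K]
    (hL : ∀ h, L h ≤ kantorovichDual ν σ h.1) {π : Measure (X × K)} [IsProbabilityMeasure π]
    (hπ : ∀ h : fstDominated ν K, ∫ p, h.1 p ∂π = L h) : MeasurePreserving Prod.snd π σ := by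
  refine ⟨measurable_snd, Measure.ext_of_integral_eq_on_compactlySupported fun ψ => ?_⟩
  obtain ⟨C, hC⟩ := ψ.hasCompactSupport.exists_bound_of_continuous ψ.continuous
  let h : fstDominated ν K := ⟨⟨fun p => ψ p.2, by fun_prop⟩,
    mem_fstDominated_of_abs_le fun p => hC p.2⟩
  calc ∫ y, ψ y ∂π.map Prod.snd
      = ∫ p, h.1 p ∂π :=
        integral_map measurable_snd.aemeasurable ψ.continuous.aestronglyMeasurable
    _ = L h := hπ h
    _ = ∫ _, 0 ∂ν + ∫ y, ψ y ∂σ :=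
        apply_eq_integral_add_integral hL (integrable_zero _ _ _)
          (ψ.continuous.integrable_of_hasCompactSupport ψ.hasCompactSupport)
          fun _ _ => (zero_add _).symm
    _ = ∫ y, ψ y ∂σ := by rw [integral_zero, zero_add]

theorem exists_measure_integral_compactlySupported_eq [T2Space X]
    [LocallyCompactSpace X] [T2Space K] (hL : ∀ h, L h ≤ kantorovichDual ν σ h.1) :
    ∃ π : Measure (X × K), IsFiniteMeasureOnCompacts π ∧
      ∀ φ : C_c(X × K, ℝ), ∫ p, φ p ∂π = L (compactlySupportedToFstDominated ν K φ) := by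
  let Λ : C_c(X × K, ℝ) →ₚ[ℝ] ℝ := PositiveLinearMap.mk₀
    (L ∘ₗ compactlySupportedToFstDominated ν K) fun φ hφ => apply_nonneg hL fun p => hφ p
  exact ⟨RealRMK.rieszMeasure Λ, inferInstance, RealRMK.integral_rieszMeasure Λ⟩

variable [T2Space X] [LocallyCompactSpace X] [SecondCountableTopology X]

theorem measurePreserving_fst_of_integral_compactlySupported_eq
    (hL : ∀ h, L h ≤ kantorovichDual ν σ h.1) {π : Measure (X × K)} [IsFiniteMeasureOnCompacts π]
    (hπ : ∀ φ : C_c(X × K, ℝ), ∫ p, φ p ∂π = L (compactlySupportedToFstDominated ν K φ)) :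
    MeasurePreserving Prod.fst π ν := by
  have := isFiniteMeasureOnCompacts_map_of_isProperMap (π := π)
    (isProperMap_fst_of_compactSpace (X := X) (Y := K))
  refine ⟨measurable_fst, Measure.ext_of_integral_eq_on_compactlySupported fun φ => ?_⟩
  calc ∫ x, φ x ∂π.map Prod.fst
      = ∫ p, φ.comp (fstCocompactMap X K) p ∂π :=
        integral_map measurable_fst.aemeasurable φ.continuous.aestronglyMeasurable
    _ = L (compactlySupportedToFstDominated ν K (φ.comp (fstCocompactMap X K))) := hπ _
    _ = ∫ x, φ x ∂ν + ∫ _, 0 ∂σ :=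
        apply_eq_integral_add_integral hL
          (φ.continuous.integrable_of_hasCompactSupport φ.hasCompactSupport)
          (integrable_zero _ _ _) fun _ _ => (add_zero _).symm
    _ = ∫ x, φ x ∂ν := by rw [integral_zero, add_zero]

theorem integral_eq_apply_of_integral_compactlySupported_eq
    (hL : ∀ h, L h ≤ kantorovichDual ν σ h.1) {π : Measure (X × K)} [IsFiniteMeasureOnCompacts π]
    (hπ : ∀ φ : C_c(X × K, ℝ), ∫ p, φ p ∂π = L (compactlySupportedToFstDominated ν K φ))
    (hfst : MeasurePreserving Prod.fst π ν) (h : fstDominated ν K) : ∫ p, h.1 p ∂π = L h := by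
  obtain ⟨w, hw, hhw⟩ := h.2
  refine eq_of_forall_dist_le fun ε hε => ?_
  obtain ⟨χ, hχ, hχw, hχε⟩ :=
    exists_compactlySupported_integral_one_sub_mul_le hw.abs (fun x => abs_nonneg _) (half_pos hε)
  let χh : C_c(X × K, ℝ) :=
    ⟨h.1 * (χ.comp (fstCocompactMap X K)).1, (χ.comp (fstCocompactMap X K)).2.mul_left⟩
  have h_int : Integrable h.1 π := integrable_of_abs_le_comp_fst hfst
    h.1.continuous.aestronglyMeasurable hw (.of_forall hhw)
  have χh_int : Integrable χh π :=
    χh.continuous.integrable_of_hasCompactSupport χh.hasCompactSupport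
  have h_sub : ∀ p, |h.1 p - χh p| ≤ (1 - χ p.1) * |w p.1| := by
    intro p
    have h_eq : h.1 p - χh p = (1 - χ p.1) * h.1 p := by
      change h.1 p - h.1 p * χ p.1 = _
      ring
    rw [h_eq, abs_mul, abs_of_nonneg (sub_nonneg.2 (hχ p.1).2)]
    exact mul_le_mul_of_nonneg_left ((hhw p).trans (le_abs_self _)) (sub_nonneg.2 (hχ p.1).2)
  have h_integral : |∫ p, h.1 p ∂π - ∫ p, χh p ∂π| ≤ ∫ x, (1 - χ x) * |w x| ∂ν := by
    rw [← integral_sub h_int χh_int]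
    exact abs_integral_le_of_abs_le_comp_fst hfst hχw h_sub
  have h_apply : |L h - L (compactlySupportedToFstDominated ν K χh)| ≤
      ∫ x, (1 - χ x) * |w x| ∂ν := by
    rw [← map_sub]
    exact abs_apply_le_integral hL hχw h_sub
  rw [← hπ] at h_apply
  calc |∫ p, h.1 p ∂π - L h|
      ≤ |∫ p, h.1 p ∂π - ∫ p, χh p ∂π| + |∫ p, χh p ∂π - L h| := abs_sub_le _ _ _
    _ ≤ ε / 2 + ε / 2 := add_le_add (h_integral.trans hχε) <| by
        rw [abs_sub_comm]; exact h_apply.trans hχε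
    _ = ε := add_halves ε

theorem exists_coupling_integral_eq_kantorovichDual [T2Space K] (c : fstDominated ν K) :
    ∃ π : Measure (X × K), MeasurePreserving Prod.fst π ν ∧ MeasurePreserving Prod.snd π σ ∧
      ∫ p, c.1 p ∂π = kantorovichDual ν σ c.1 := by
  obtain ⟨L, hLc, hL⟩ := exists_linearMap_apply_eq_kantorovichDual (σ := σ) c
  obtain ⟨π, _, hπ⟩ := exists_measure_integral_compactlySupported_eq hL
  have hfst := measurePreserving_fst_of_integral_compactlySupported_eq hL hπ
  have : IsProbabilityMeasure (π.map Prod.fst) := hfst.map_eq ▸ ‹_›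
  have := Measure.isProbabilityMeasure_of_map (μ := π) Prod.fst
  have hπ' := integral_eq_apply_of_integral_compactlySupported_eq hL hπ hfst
  exact ⟨π, hfst, measurePreserving_snd_of_integral_eq_apply hL hπ', (hπ' c).trans hLc⟩

end Representation

section FenchelConjugate

variable {E : Type*} [NormedAddCommGroup E] [InnerProductSpace ℝ E] {ι : Type*}

/-- The Legendre–Fenchel conjugate `x ↦ sup_i (⟪x, v i⟫ - g i)` of a function `g` that is known
only at the points `v i`; it takes the junk value `0` where the supremum is infinite. -/
def fenchelConjugate (v : ι → E) (g : ι → ℝ) (x : E) : ℝ :=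
  ⨆ i, (⟪x, v i⟫ - g i)

variable {v : ι → E} {g : ι → ℝ}

theorem measurable_fenchelConjugate [Countable ι] [MeasurableSpace E] [OpensMeasurableSpace E] :
    Measurable (fenchelConjugate v g) :=
  Measurable.iSup fun _ => Continuous.measurable (by fun_prop)

theorem inner_le_add_fenchelConjugate_comp {f : E → ℝ} (hf : Continuous f) (hv : DenseRange v)
    {y : E} (h_bdd : BddAbove (range fun i => ⟪y, v i⟫ - (f ∘ v) i)) (x : E) :
    ⟪x, y⟫ ≤ f x + fenchelConjugate v (f ∘ v) y := by
  refine hv.induction_on (p := fun x => ⟪x, y⟫ ≤ f x + _) x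
    (isClosed_le (by fun_prop) (by fun_prop)) fun i => ?_
  rw [real_inner_comm, ← sub_le_iff_le_add']
  exact le_ciSup h_bdd i

variable [Nonempty ι]

theorem convexOn_fenchelConjugate (h_bdd : ∀ x, BddAbove (range fun i => ⟪x, v i⟫ - g i)) :
    ConvexOn ℝ univ (fenchelConjugate v g) := by
  refine ⟨convex_univ, fun x _ z _ a b ha hb hab => ciSup_le fun i => ?_⟩
  calc ⟪a • x + b • z, v i⟫ - g i
      = a * (⟪x, v i⟫ - g i) + b * (⟪z, v i⟫ - g i) := by
        rw [inner_add_left, real_inner_smul_left, real_inner_smul_left]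
        linear_combination g i * hab
    _ ≤ a • fenchelConjugate v g x + b • fenchelConjugate v g z :=
        add_le_add (mul_le_mul_of_nonneg_left (le_ciSup (h_bdd x) i) ha)
          (mul_le_mul_of_nonneg_left (le_ciSup (h_bdd z) i) hb)

theorem lipschitzWith_fenchelConjugate (h_bdd : ∀ x, BddAbove (range fun i => ⟪x, v i⟫ - g i))
    {k : ℝ≥0} (hv : ∀ i, ‖v i‖ ≤ k) : LipschitzWith k (fenchelConjugate v g) := by
  refine LipschitzWith.of_le_add_mul k fun x z => ciSup_le fun i => ?_
  have h_inner : ⟪x - z, v i⟫ ≤ k * dist x z := by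
    rw [dist_eq_norm, mul_comm]
    exact (real_inner_le_norm _ _).trans (mul_le_mul_of_nonneg_left (hv i) (norm_nonneg _))
  have h_le : ⟪z, v i⟫ - g i ≤ fenchelConjugate v g z := le_ciSup (h_bdd z) i
  rw [inner_sub_left] at h_inner
  linarith

end FenchelConjugate

section EpsSubdifferential

variable {E : Type*} [NormedAddCommGroup E] [InnerProductSpace ℝ E] {f : E → ℝ} {ε : ℝ} {x y : E}

/-- The `ε`-subdifferential of `f` at `x`: the slopes of the affine functions below `f + ε` that
agree with `f` at `x`. -/
def epsSubdifferential (f : E → ℝ) (ε : ℝ) (x : E) : Set E :=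
  {y | ∀ z, f x + ⟪z - x, y⟫ ≤ f z + ε}

theorem norm_le_of_mem_epsSubdifferential {k : ℝ≥0} (hf : LipschitzWith k f)
    (hy : y ∈ epsSubdifferential f ε x) : ‖y‖ ≤ k := by
  rcases eq_or_ne y 0 with rfl | hy₀
  · simp
  by_contra! h_lt
  have h_pos : 0 < (‖y‖ - k) * ‖y‖ := mul_pos (sub_pos.2 h_lt) (norm_pos_iff.2 hy₀)
  obtain ⟨n, hn⟩ := exists_nat_gt (ε / ((‖y‖ - k) * ‖y‖))
  rw [div_lt_iff₀ h_pos] at hn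
  have h_sub : f x + n * ‖y‖ ^ 2 ≤ f (x + (n : ℝ) • y) + ε := by
    simpa [real_inner_smul_left] using hy (x + (n : ℝ) • y)
  have h_lip : f (x + (n : ℝ) • y) ≤ f x + k * (n * ‖y‖) := by
    simpa [dist_eq_norm, norm_smul] using hf.le_add_mul (x + (n : ℝ) • y) x
  linarith

theorem inner_sub_le_of_mem_epsSubdifferential (hy : y ∈ epsSubdifferential f ε x) (z : E) :
    ⟪y, z⟫ - f z ≤ ⟪x, y⟫ - f x + ε := by
  have := hy z
  rw [inner_sub_left, real_inner_comm] at this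
  linarith

theorem fenchelConjugate_comp_le_of_mem_epsSubdifferential {ι : Type*} [Nonempty ι] (v : ι → E)
    (hy : y ∈ epsSubdifferential f ε x) :
    fenchelConjugate v (f ∘ v) y ≤ ⟪x, y⟫ - f x + ε :=
  ciSup_le fun i => inner_sub_le_of_mem_epsSubdifferential hy (v i)

theorem bddAbove_range_of_mem_epsSubdifferential {ι : Type*} (v : ι → E)
    (hy : y ∈ epsSubdifferential f ε x) : BddAbove (range fun i => ⟪y, v i⟫ - (f ∘ v) i) :=
  ⟨_, forall_mem_range.2 fun i => inner_sub_le_of_mem_epsSubdifferential hy (v i)⟩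

theorem exists_measurable_mem_epsSubdifferential [CompleteSpace E] [SecondCountableTopology E]
    [MeasurableSpace E] [OpensMeasurableSpace E] (hf : ConvexOn ℝ univ f) (hf' : Continuous f)
    (hε : 0 < ε) : ∃ T : E → E, Measurable T ∧ ∀ x, T x ∈ epsSubdifferential f ε x := by
  obtain ⟨l, c, h_le, h_sup⟩ := hf.real_univ_sSup_of_nat_affine_eq hf'.lowerSemicontinuous
  have h_exists : ∀ x, ∃ n, f x - ε < l n x + c n := by
    intro x
    have h_lt : f x - ε < ⨆ n, (l n x + c n) := by
      rw [← h_sup, iSup_apply]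
      exact sub_lt_self _ hε
    exact exists_lt_of_lt_ciSup h_lt
  classical
  let slope : ℕ → E := fun n => (InnerProductSpace.toDual ℝ E).symm (l n)
  have measurable_index : Measurable fun x => Nat.find (h_exists x) :=
    measurable_find h_exists fun n => measurableSet_lt (by fun_prop) (by fun_prop)
  refine ⟨fun x => slope (Nat.find (h_exists x)),
    (measurable_from_nat (f := slope)).comp measurable_index,
    fun x z => ?_⟩
  have h_find := Nat.find_spec (h_exists x)
  have h_le_z := h_le (Nat.find (h_exists x)) z
  rw [real_inner_comm, InnerProductSpace.toDual_symm_apply, map_sub]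
  simp only [Pi.add_apply, Function.const_apply] at h_le_z
  linarith

end EpsSubdifferential

section LipschitzIntegral

variable {E : Type*} [NormedAddCommGroup E] [MeasurableSpace E] [OpensMeasurableSpace E]
  {f : E → ℝ} {k : ℝ≥0} {α : Measure E} [IsProbabilityMeasure α]

theorem integrable_of_lipschitzWith (hf : LipschitzWith k f) (hα : Integrable (‖·‖) α) :
    Integrable f α := by
  refine ((hα.const_mul (k : ℝ)).add (integrable_const ‖f 0‖)).mono'
    hf.continuous.aestronglyMeasurable (.of_forall fun x => ?_)
  have h_lip : ‖f x - f 0‖ ≤ k * ‖x‖ := by simpa using hf.norm_sub_le x 0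
  exact (norm_le_norm_sub_add _ _).trans (add_le_add_left h_lip _)

theorem abs_integral_sub_le_of_lipschitzWith (hf : LipschitzWith k f) (hα : Integrable (‖·‖) α) :
    |∫ x, f x ∂α - f 0| ≤ k * ∫ x, ‖x‖ ∂α := by
  have h_const : ∫ _, f 0 ∂α = f 0 := by simp
  have h_int := integrable_of_lipschitzWith hf hα
  nth_rw 1 [← h_const]
  rw [← integral_sub h_int (integrable_const _), ← integral_const_mul,
    ← Real.norm_eq_abs]
  refine norm_integral_le_of_norm_le (hα.const_mul _) (.of_forall fun x => ?_)
  simpa using hf.norm_sub_le x 0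

theorem neg_mul_le_integral_sub_integral_of_lipschitzWith {μ ν : Measure E}
    [IsProbabilityMeasure μ] [IsProbabilityMeasure ν]
    (hμ : Integrable (‖·‖) μ) (hν : Integrable (‖·‖) ν) (hf : LipschitzWith k f) :
    -(k * (∫ x, ‖x‖ ∂μ + ∫ x, ‖x‖ ∂ν)) ≤ ∫ x, f x ∂ν - ∫ x, f x ∂μ := by
  have h_μ := (abs_le.1 (abs_integral_sub_le_of_lipschitzWith hf hμ)).2
  have h_ν := (abs_le.1 (abs_integral_sub_le_of_lipschitzWith hf hν)).1
  linarith

end LipschitzIntegral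

section OTcost

variable {d : ℕ} {k : ℝ≥0} {α β : Measure (EuclideanSpace ℝ (Fin d))}
  {π : Measure (EuclideanSpace ℝ (Fin d) × EuclideanSpace ℝ (Fin d))}

theorem mem_couplings_iff :
    π ∈ Couplings α β ↔ MeasurePreserving Prod.fst π α ∧ MeasurePreserving Prod.snd π β :=
  ⟨fun h => ⟨⟨measurable_fst, h.1⟩, ⟨measurable_snd, h.2⟩⟩, fun h => ⟨h.1.map_eq, h.2.map_eq⟩⟩

theorem integrable_inner_of_mem_couplings (hα : Integrable (‖·‖) α) (hβ : ∀ᵐ y ∂β, ‖y‖ ≤ k)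
    (hπ : π ∈ Couplings α β) : Integrable (fun p => ⟪p.1, p.2⟫) π := by
  obtain ⟨hfst, hsnd⟩ := mem_couplings_iff.1 hπ
  refine integrable_of_abs_le_comp_fst hfst (Continuous.aestronglyMeasurable (by fun_prop))
    (hα.mul_const (k : ℝ)) ?_
  filter_upwards [hsnd.quasiMeasurePreserving.ae hβ] with p hp
  exact (abs_real_inner_le_norm _ _).trans (mul_le_mul_of_nonneg_left hp (norm_nonneg _))

theorem integral_inner_le_of_mem_couplings (hα : Integrable (‖·‖) α) (hβ : ∀ᵐ y ∂β, ‖y‖ ≤ k)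
    {f g : EuclideanSpace ℝ (Fin d) → ℝ} (hf : Integrable f α) (hg : Integrable g β)
    (hfg : ∀ᵐ y ∂β, ∀ x, ⟪x, y⟫ ≤ f x + g y) (hπ : π ∈ Couplings α β) :
    ∫ p, ⟪p.1, p.2⟫ ∂π ≤ ∫ x, f x ∂α + ∫ y, g y ∂β := by
  obtain ⟨hfst, hsnd⟩ := mem_couplings_iff.1 hπ
  refine integral_le_integral_add_integral_of_marginals hfst hsnd
    (integrable_inner_of_mem_couplings hα hβ hπ) hf hg ?_
  filter_upwards [hsnd.quasiMeasurePreserving.ae hfg] with p hp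
  exact hp p.1

theorem integral_inner_le_OTcost (hα : Integrable (‖·‖) α) (hβ : ∀ᵐ y ∂β, ‖y‖ ≤ k)
    (hπ : π ∈ Couplings α β) : ∫ p, ⟪p.1, p.2⟫ ∂π ≤ OTcost α β := by
  refine le_csSup ⟨∫ x, ‖x‖ * k ∂α + ∫ _, 0 ∂β, ?_⟩ ⟨π, hπ, rfl⟩
  rintro _ ⟨π', hπ', rfl⟩
  refine integral_inner_le_of_mem_couplings hα hβ (hα.mul_const _) (integrable_zero _ _ _) ?_ hπ'
  filter_upwards [hβ] with y hy x
  rw [add_zero]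
  exact (real_inner_le_norm _ _).trans (mul_le_mul_of_nonneg_left hy (norm_nonneg _))

theorem OTcost_le_integral_add_integral [IsProbabilityMeasure α] [IsProbabilityMeasure β]
    (hα : Integrable (‖·‖) α) (hβ : ∀ᵐ y ∂β, ‖y‖ ≤ k) {f g : EuclideanSpace ℝ (Fin d) → ℝ}
    (hf : Integrable f α) (hg : Integrable g β) (hfg : ∀ᵐ y ∂β, ∀ x, ⟪x, y⟫ ≤ f x + g y) :
    OTcost α β ≤ ∫ x, f x ∂α + ∫ y, g y ∂β := by
  have h_prod : α.prod β ∈ Couplings α β :=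
    mem_couplings_iff.2 ⟨measurePreserving_fst, measurePreserving_snd⟩
  refine csSup_le ⟨_, _, h_prod, rfl⟩ ?_
  rintro _ ⟨π, hπ, rfl⟩
  exact integral_inner_le_of_mem_couplings hα hβ hf hg hfg hπ

end OTcost

theorem ae_map_norm_le {Ω E : Type*} [MeasurableSpace Ω] [SeminormedAddCommGroup E]
    [MeasurableSpace E] [OpensMeasurableSpace E] {α : Measure Ω} {T : Ω → E} {C : ℝ}
    (hT : Measurable T) (hTC : ∀ ω, ‖T ω‖ ≤ C) : ∀ᵐ y ∂α.map T, ‖y‖ ≤ C :=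
  (ae_map_iff hT.aemeasurable (measurableSet_le (by fun_prop) (by fun_prop))).2 (.of_forall hTC)

theorem ae_norm_le_iff_measure_compl_closedBall_eq_zero {E : Type*} [SeminormedAddCommGroup E]
    [MeasurableSpace E] {ρ : Measure E} {k : ℝ} :
    (∀ᵐ y ∂ρ, ‖y‖ ≤ k) ↔ ρ (closedBall 0 k)ᶜ = 0 := by
  rw [← mem_ae_iff]
  simp only [← mem_closedBall_zero_iff]
  rfl

section SubgradientPushforward

variable {E : Type*} [NormedAddCommGroup E] [InnerProductSpace ℝ E] [SecondCountableTopology E]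
  [MeasurableSpace E] [BorelSpace E] {k : ℝ≥0} {μ : Measure E} {T : E → E}

theorem integrable_inner_of_norm_le (hμ : Integrable (‖·‖) μ) (hT : Measurable T)
    (hTk : ∀ x, ‖T x‖ ≤ k) : Integrable (fun x => ⟪x, T x⟫) μ :=
  (hμ.mul_const (k : ℝ)).mono' (by fun_prop) <| .of_forall fun x =>
    (abs_real_inner_le_norm _ _).trans (mul_le_mul_of_nonneg_left (hTk x) (norm_nonneg _))

theorem integral_fenchelConjugate_map_le [IsProbabilityMeasure μ] {f : E → ℝ} {ε : ℝ}
    (hμ : Integrable (‖·‖) μ) (hf : LipschitzWith k f) (hT : Measurable T)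
    (hTf : ∀ x, T x ∈ epsSubdifferential f ε x) {ι : Type*} [Countable ι] [Nonempty ι] {v : ι → E}
    (hv : DenseRange v) :
    Integrable (fenchelConjugate v (f ∘ v)) (μ.map T) ∧
      ∫ y, fenchelConjugate v (f ∘ v) y ∂μ.map T ≤ ∫ x, ⟪x, T x⟫ ∂μ - ∫ x, f x ∂μ + ε := by
  have g_meas : Measurable (fenchelConjugate v (f ∘ v)) := measurable_fenchelConjugate
  have f_int := integrable_of_lipschitzWith hf hμ
  have h_inner := integrable_inner_of_norm_le hμ hT
    fun x => norm_le_of_mem_epsSubdifferential hf (hTf x)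
  have h_lower : ∀ x, ⟪x, T x⟫ - f x ≤ fenchelConjugate v (f ∘ v) (T x) := fun x =>
    sub_le_iff_le_add'.2 (inner_le_add_fenchelConjugate_comp hf.continuous hv
      (bddAbove_range_of_mem_epsSubdifferential v (hTf x)) x)
  have h_upper : ∀ x, fenchelConjugate v (f ∘ v) (T x) ≤ ⟪x, T x⟫ - f x + ε := fun x =>
    fenchelConjugate_comp_le_of_mem_epsSubdifferential v (hTf x)
  have h_lower_int : Integrable (fun x => ⟪x, T x⟫ - f x) μ := h_inner.sub f_int
  have h_upper_int : Integrable (fun x => ⟪x, T x⟫ - f x + ε) μ :=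
    h_lower_int.add (integrable_const ε)
  have gT_int : Integrable (fun x => fenchelConjugate v (f ∘ v) (T x)) μ :=
    integrable_of_le_of_le (g_meas.comp hT).aestronglyMeasurable (.of_forall h_lower)
      (.of_forall h_upper) h_lower_int h_upper_int
  refine ⟨(integrable_map_measure g_meas.aestronglyMeasurable hT.aemeasurable).2 gT_int, ?_⟩
  calc ∫ y, fenchelConjugate v (f ∘ v) y ∂μ.map T
      = ∫ x, fenchelConjugate v (f ∘ v) (T x) ∂μ :=
        integral_map hT.aemeasurable g_meas.aestronglyMeasurable
    _ ≤ ∫ x, (⟪x, T x⟫ - f x + ε) ∂μ := integral_mono gT_int h_upper_int h_upper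
    _ = ∫ x, ⟪x, T x⟫ ∂μ - ∫ x, f x ∂μ + ε := by
        rw [integral_add h_lower_int (integrable_const ε), integral_sub h_inner f_int]
        simp

end SubgradientPushforward

section SubgradientTransport

variable {d : ℕ} {k : ℝ≥0} {μ ν : Measure (EuclideanSpace ℝ (Fin d))}
  {T : EuclideanSpace ℝ (Fin d) → EuclideanSpace ℝ (Fin d)}

theorem map_prodMk_id_mem_couplings (hT : Measurable T) :
    μ.map (fun x => (x, T x)) ∈ Couplings μ (μ.map T) := by
  have h_meas : Measurable fun x => (x, T x) := by fun_prop
  exact ⟨(Measure.map_map measurable_fst h_meas).trans Measure.map_id,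
    Measure.map_map measurable_snd h_meas⟩

theorem integral_inner_le_OTcost_map (hμ : Integrable (‖·‖) μ) (hT : Measurable T)
    (hTk : ∀ x, ‖T x‖ ≤ k) : ∫ x, ⟪x, T x⟫ ∂μ ≤ OTcost μ (μ.map T) := by
  have h_map : ∫ p, ⟪p.1, p.2⟫ ∂μ.map (fun x => (x, T x)) = ∫ x, ⟪x, T x⟫ ∂μ :=
    integral_map (by fun_prop) (Continuous.aestronglyMeasurable (by fun_prop))
  exact h_map.symm.trans_le
    (integral_inner_le_OTcost hμ (ae_map_norm_le hT hTk) (map_prodMk_id_mem_couplings hT))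

variable [IsProbabilityMeasure μ] {f : EuclideanSpace ℝ (Fin d) → ℝ} {ε : ℝ}

theorem OTcost_map_sub_OTcost_map_le [IsProbabilityMeasure ν] (hμ : Integrable (‖·‖) μ)
    (hν : Integrable (‖·‖) ν) (hf : LipschitzWith k f) (hT : Measurable T)
    (hTf : ∀ x, T x ∈ epsSubdifferential f ε x) :
    OTcost ν (μ.map T) - OTcost μ (μ.map T) ≤ ∫ x, f x ∂ν - ∫ x, f x ∂μ + ε := by
  have hTk : ∀ x, ‖T x‖ ≤ k := fun x => norm_le_of_mem_epsSubdifferential hf (hTf x)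
  obtain ⟨v, hv⟩ := exists_dense_seq (EuclideanSpace ℝ (Fin d))
  have := Measure.isProbabilityMeasure_map (μ := μ) hT.aemeasurable
  obtain ⟨g_int, hg⟩ := integral_fenchelConjugate_map_le hμ hf hT hTf hv
  have h_conj : ∀ᵐ y ∂μ.map T, ∀ x, ⟪x, y⟫ ≤ f x + fenchelConjugate v (f ∘ v) y := by
    have h_bdd : ∀ᵐ y ∂μ.map T, BddAbove (range fun n => ⟪y, v n⟫ - (f ∘ v) n) :=
      (ae_map_iff hT.aemeasurable (measurableSet_bddAbove_range (by fun_prop))).2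
        (.of_forall fun x => bddAbove_range_of_mem_epsSubdifferential v (hTf x))
    filter_upwards [h_bdd] with y hy
    exact inner_le_add_fenchelConjugate_comp hf.continuous hv hy
  have h_dual := OTcost_le_integral_add_integral hν (ae_map_norm_le hT hTk)
    (integrable_of_lipschitzWith hf hν) g_int h_conj
  linarith [integral_inner_le_OTcost_map hμ hT hTk]

theorem exists_OTcost_sub_OTcost_le [IsProbabilityMeasure ν] (hμ : Integrable (‖·‖) μ)
    (hν : Integrable (‖·‖) ν) (hf : ConvexOn ℝ univ f) (hf' : LipschitzWith k f) (hε : 0 < ε) :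
    ∃ ρ : Measure (EuclideanSpace ℝ (Fin d)), IsProbabilityMeasure ρ ∧ (∀ᵐ y ∂ρ, ‖y‖ ≤ k) ∧
      OTcost ν ρ - OTcost μ ρ ≤ ∫ x, f x ∂ν - ∫ x, f x ∂μ + ε := by
  obtain ⟨T, hT, hTf⟩ := exists_measurable_mem_epsSubdifferential hf hf'.continuous hε
  exact ⟨μ.map T, Measure.isProbabilityMeasure_map hT.aemeasurable,
    ae_map_norm_le hT fun x => norm_le_of_mem_epsSubdifferential hf' (hTf x),
    OTcost_map_sub_OTcost_map_le hμ hν hf' hT hTf⟩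

end SubgradientTransport

section KantorovichPotential

variable {d : ℕ} {k : ℝ≥0} {μ ν : Measure (EuclideanSpace ℝ (Fin d))} [IsProbabilityMeasure μ]
  [IsProbabilityMeasure ν] {K : Type*} [MeasurableSpace K] {σ : Measure K}
  [IsProbabilityMeasure σ] {v : K → EuclideanSpace ℝ (Fin d)} {ε : ℝ}

theorem OTcost_map_le_integral_add_integral (hμ : Integrable (‖·‖) μ) (hv : MeasurableEmbedding v)
    (hvk : ∀ y, ‖v y‖ ≤ k) {f : EuclideanSpace ℝ (Fin d) → ℝ} {g : K → ℝ} (hf : Integrable f μ)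
    (hg : Integrable g σ) (hfg : ∀ x y, ⟪x, v y⟫ ≤ f x + g y) :
    OTcost μ (σ.map v) ≤ ∫ x, f x ∂μ + ∫ y, g y ∂σ := by
  have extend_comp : Function.extend v g 0 ∘ v = g := Function.extend_comp hv.injective g 0
  have h_integral : ∫ z, Function.extend v g 0 z ∂σ.map v = ∫ y, g y ∂σ :=
    (hv.integral_map _).trans (congrArg (integral σ) extend_comp)
  have := Measure.isProbabilityMeasure_map (μ := σ) hv.measurable.aemeasurable
  rw [← h_integral]
  refine OTcost_le_integral_add_integral hμ (hv.ae_map_iff.2 (.of_forall hvk)) hf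
    (hv.integrable_map_iff.2 (by rwa [extend_comp])) (hv.ae_map_iff.2 (.of_forall fun y x => ?_))
  simpa only [hv.injective.extend_apply] using hfg x y

variable [TopologicalSpace K] [CompactSpace K] [SecondCountableTopology K] [T2Space K]
  [BorelSpace K]

theorem exists_integral_add_integral_lt_OTcost_map_add (hν : Integrable (‖·‖) ν)
    (hv : Continuous v) (hvk : ∀ y, ‖v y‖ ≤ k) (hε : 0 < ε) :
    ∃ (f : EuclideanSpace ℝ (Fin d) → ℝ) (g : K → ℝ), Integrable f ν ∧ Integrable g σ ∧
      (∀ x y, ⟪x, v y⟫ ≤ f x + g y) ∧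
      ∫ x, f x ∂ν + ∫ y, g y ∂σ < OTcost ν (σ.map v) + ε := by
  let c : fstDominated ν K := ⟨⟨fun p => ⟪p.1, v p.2⟫, by fun_prop⟩, fun x => ‖x‖ * k,
    hν.mul_const _, fun p => (abs_real_inner_le_norm _ _).trans
      (mul_le_mul_of_nonneg_left (hvk p.2) (norm_nonneg _))⟩
  obtain ⟨π, hfst, hsnd, hπ⟩ := exists_coupling_integral_eq_kantorovichDual (σ := σ) c
  have h_prod : Measurable (Prod.map id v : EuclideanSpace ℝ (Fin d) × K → _) :=
    measurable_id.prodMap hv.measurable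
  have h_mem : π.map (Prod.map id v) ∈ Couplings ν (σ.map v) := by
    refine ⟨(Measure.map_map measurable_fst h_prod).trans hfst.map_eq, ?_⟩
    rw [Measure.map_map measurable_snd h_prod, ← hsnd.map_eq,
      Measure.map_map hv.measurable measurable_snd]
    rfl
  have h_map : ∫ p, ⟪p.1, p.2⟫ ∂π.map (Prod.map id v) = kantorovichDual ν σ c.1 :=
    (integral_map h_prod.aemeasurable (Continuous.aestronglyMeasurable (by fun_prop))).trans hπ
  have h_lt : kantorovichDual ν σ c.1 < OTcost ν (σ.map v) + ε := by
    rw [← h_map]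
    exact lt_add_of_le_of_pos
      (integral_inner_le_OTcost hν (ae_map_norm_le hv.measurable hvk) h_mem) hε
  obtain ⟨_, ⟨f, g, hf, hg, hfg, rfl⟩, h_val⟩ :=
    exists_lt_of_csInf_lt (kantorovichDualValues_nonempty c.2) h_lt
  exact ⟨f, g, hf, hg, hfg, h_val⟩

theorem exists_convexOn_lipschitzWith_le_OTcost_map (hμ : Integrable (‖·‖) μ)
    (hν : Integrable (‖·‖) ν) (hv : IsClosedEmbedding v) (hvk : ∀ y, ‖v y‖ ≤ k) (hε : 0 < ε) :
    ∃ f : EuclideanSpace ℝ (Fin d) → ℝ, ConvexOn ℝ univ f ∧ LipschitzWith k f ∧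
      ∫ x, f x ∂ν - ∫ x, f x ∂μ ≤ OTcost ν (σ.map v) - OTcost μ (σ.map v) + ε := by
  obtain ⟨f, g, hf, hg, hfg, h_lt⟩ :=
    exists_integral_add_integral_lt_OTcost_map_add (σ := σ) hν hv.continuous hvk hε
  have : Nonempty K := nonempty_of_isProbabilityMeasure σ
  have h_le : ∀ x y, ⟪x, v y⟫ - g y ≤ f x := fun x y => sub_le_iff_le_add.2 (hfg x y)
  have h_bdd : ∀ x, BddAbove (range fun y => ⟪x, v y⟫ - g y) := fun x =>
    ⟨f x, forall_mem_range.2 (h_le x)⟩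
  have h_lip := lipschitzWith_fenchelConjugate h_bdd hvk
  have h_ν : ∫ x, fenchelConjugate v g x ∂ν ≤ ∫ x, f x ∂ν :=
    integral_mono (integrable_of_lipschitzWith h_lip hν) hf fun x => ciSup_le (h_le x)
  have h_μ : OTcost μ (σ.map v) ≤ ∫ x, fenchelConjugate v g x ∂μ + ∫ y, g y ∂σ :=
    OTcost_map_le_integral_add_integral hμ hv.measurableEmbedding hvk
      (integrable_of_lipschitzWith h_lip hμ) hg fun x y =>
        sub_le_iff_le_add.1 (le_ciSup (h_bdd x) y)
  exact ⟨fenchelConjugate v g, convexOn_fenchelConjugate h_bdd, h_lip, by linarith⟩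


theorem exists_convexOn_lipschitzWith_le_OTcost {ρ : Measure (EuclideanSpace ℝ (Fin d))}
    [IsProbabilityMeasure ρ] (hμ : Integrable (‖·‖) μ) (hν : Integrable (‖·‖) ν)
    (hρ : ∀ᵐ y ∂ρ, ‖y‖ ≤ k) (hε : 0 < ε) :
    ∃ f : EuclideanSpace ℝ (Fin d) → ℝ, ConvexOn ℝ univ f ∧ LipschitzWith k f ∧
      ∫ x, f x ∂ν - ∫ x, f x ∂μ ≤ OTcost ν ρ - OTcost μ ρ + ε := by
  let B : Set (EuclideanSpace ℝ (Fin d)) := closedBall 0 k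
  have : CompactSpace B := isCompact_iff_compactSpace.1 (isCompact_closedBall 0 _)
  have hB : IsClosedEmbedding (Subtype.val : B → _) :=
    isClosed_closedBall.isClosedEmbedding_subtypeVal
  have hρB : ∀ᵐ y ∂ρ, y ∈ B := by simpa only [B, mem_closedBall_zero_iff] using hρ
  have h_map : (ρ.comap Subtype.val).map (Subtype.val : B → _) = ρ := by
    rw [map_comap_subtype_coe isClosed_closedBall.measurableSet,
      Measure.restrict_eq_self_of_ae_mem hρB]
  have : IsProbabilityMeasure (ρ.comap (Subtype.val : B → _)) :=
    hB.measurableEmbedding.isProbabilityMeasure_comap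
      (hρB.mono fun y hy => Subtype.range_val.symm ▸ hy)
  have h := exists_convexOn_lipschitzWith_le_OTcost_map (σ := ρ.comap (Subtype.val : B → _))
    hμ hν hB (fun y => mem_closedBall_zero_iff.1 y.2) hε
  rwa [h_map] at h

end KantorovichPotential

theorem stmt13 (d : ℕ) (hd : 1 ≤ d) (k : ℝ) (hk : 0 < k)
    (μ ν : Measure (EuclideanSpace ℝ (Fin d)))
    [IsProbabilityMeasure μ] [IsProbabilityMeasure ν]
    (hμ : Integrable (fun x => ‖x‖) μ) (hν : Integrable (fun y => ‖y‖) ν) :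
    sInf {r : ℝ | ∃ f : EuclideanSpace ℝ (Fin d) → ℝ,
        ConvexOn ℝ Set.univ f ∧
        (∀ x x' : EuclideanSpace ℝ (Fin d), |f x - f x'| ≤ k * ‖x - x'‖) ∧
        r = ∫ x, f x ∂ν - ∫ x, f x ∂μ}
      = sInf {r : ℝ | ∃ ρ : Measure (EuclideanSpace ℝ (Fin d)),
        IsProbabilityMeasure ρ ∧ ρ (closedBall (0 : EuclideanSpace ℝ (Fin d)) k)ᶜ = 0 ∧
        r = OTcost ν ρ - OTcost μ ρ} := by
  lift k to ℝ≥0 using hk.le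
  simp only [← Real.norm_eq_abs, ← lipschitzWith_iff_norm_sub_le,
    ← ae_norm_le_iff_measure_compl_closedBall_eq_zero]
  refine csInf_eq_csInf_of_forall_exists_le_add
    ⟨_, 0, convexOn_const 0 convex_univ, LipschitzWith.const' 0, rfl⟩
    ⟨-(k * (∫ x, ‖x‖ ∂μ + ∫ x, ‖x‖ ∂ν)), ?_⟩ ?_ ?_
  · rintro _ ⟨f, -, hf, rfl⟩
    exact neg_mul_le_integral_sub_integral_of_lipschitzWith hμ hν hf
  · rintro _ ⟨f, hf, hf', rfl⟩ ε hε
    obtain ⟨ρ, hρ, hρk, hle⟩ := exists_OTcost_sub_OTcost_le hμ hν hf hf' hε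
    exact ⟨_, ⟨ρ, hρ, hρk, rfl⟩, hle⟩
  · rintro _ ⟨ρ, hρ, hρk, rfl⟩ ε hε
    obtain ⟨f, hf, hf', hle⟩ := exists_convexOn_lipschitzWith_le_OTcost hμ hν hρk hε
    exact ⟨_, ⟨f, hf, hf', rfl⟩, hle⟩
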